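/- arXiv:2509.18931 — 3 statements merged into one kernel-verified Lean document; each statement's English description precedes it below -/
import Mathlib

section
/- For any sequence k = k(n) of natural numbers with k(n) → ∞ as n → ∞, the pair sum over single-gap pairs sharing few edges converges to 4: Σ_{s=0}^{k(n)} c_{s,1} → 4 as n → ∞. -/
open MeasureTheory Filter

namespace RandomHypercube

/-- Index of a (potential) hypercube edge: the lower endpoint `A` together with the
direction `i` that is added, representing the edge from `A` to `A ∪ {i}`. -/
abbrev EdgeIdx (n : ℕ) := Finset (Fin n) × Fin n

/-- The sample space: an i.i.d. Uniform[0,1] weight for each edge index. -/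
abbrev CubeOmega (n : ℕ) := EdgeIdx n → ℝ

/-- The product of uniform measures on [0,1], one for each edge. -/
noncomputable def cubeMeasure (n : ℕ) : Measure (CubeOmega n) :=
  Measure.pi fun _ => (volume : Measure ℝ).restrict (Set.Icc 0 1)

/-- The vertex visited by the direct path associated to the permutation `σ`
just before taking its `j`-th step: the image under `σ` of `{0, …, j-1}`. -/
def initSeg (n : ℕ) (σ : Equiv.Perm (Fin n)) (j : Fin n) : Finset (Fin n) :=
  (Finset.univ.filter fun i => i < j).image σ

/-- The edge used in the `j`-th step of the direct path associated to `σ`. -/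
def pathEdge (n : ℕ) (σ : Equiv.Perm (Fin n)) (j : Fin n) : EdgeIdx n :=
  (initSeg n σ j, σ j)

/-- The direct path associated to `σ` is accessible if its successive edge
weights are strictly increasing. -/
def Accessible (n : ℕ) (σ : Equiv.Perm (Fin n)) (ω : CubeOmega n) : Prop :=
  StrictMono fun j : Fin n => ω (pathEdge n σ j)

/-- The number of accessible direct paths from `∅` to `[n]`. -/
noncomputable def X (n : ℕ) (ω : CubeOmega n) : ℕ :=
  Nat.card {σ : Equiv.Perm (Fin n) // Accessible n σ ω}


/-- The set of steps `j` at which the direct paths of `σ` and `σ'` use the same edge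
(shared edges necessarily occur at the same level in both paths). -/
def sharedSteps (n : ℕ) (σ σ' : Equiv.Perm (Fin n)) : Finset (Fin n) :=
  Finset.univ.filter fun j => pathEdge n σ j = pathEdge n σ' j

/-- Given the sorted list `l` of steps (levels) of the shared edges, the gap vector:
the number of edges before the first shared edge, strictly between consecutive shared
edges, and after the last shared edge. -/
def gapsOfList (n : ℕ) (l : List ℕ) : List ℕ :=
  List.zipWith (fun a b => b - a) (0 :: l.map (· + 1)) (l ++ [n])

/-- The gap vector of the direct path of `σ'` relative to that of `σ`. -/
def gapVector (n : ℕ) (σ σ' : Equiv.Perm (Fin n)) : List ℕ :=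
  gapsOfList n (((sharedSteps n σ σ').sort (· ≤ ·)).map Fin.val)

/-- The number of (nontrivial) gaps between the direct paths of `σ` and `σ'`:
the number of nonzero entries of the gap vector. -/
def numGaps (n : ℕ) (σ σ' : Equiv.Perm (Fin n)) : ℕ :=
  ((gapVector n σ σ').filter (· != 0)).length

/-- The probability that the direct paths of `σ` and `σ'` are both accessible. -/
noncomputable def pairProb (n : ℕ) (σ σ' : Equiv.Perm (Fin n)) : ℝ :=
  (cubeMeasure n {ω | Accessible n σ ω ∧ Accessible n σ' ω}).toReal

/-- `c n s g`: the sum, over all ordered pairs of direct paths sharing exactly `s`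
edges with `g` gaps, of the probability that both paths are accessible. -/
noncomputable def c (n s g : ℕ) : ℝ :=
  ∑ p ∈ Finset.univ.filter
      (fun p : Equiv.Perm (Fin n) × Equiv.Perm (Fin n) =>
        (sharedSteps n p.1 p.2).card = s ∧ numGaps n p.1 p.2 = g),
    pairProb n p.1 p.2

/-- `w m`: the number of direct paths from `∅` to `[m]` in the `m`-dimensional hypercube
that are edge-disjoint from the canonical path (the identity permutation). -/
noncomputable def w (m : ℕ) : ℕ :=
  Nat.card {σ : Equiv.Perm (Fin m) // sharedSteps m σ 1 = ∅}

end RandomHypercube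


namespace RandomHypercube

section Sym
set_option linter.unusedSectionVars false
variable {ι : Type*} [Fintype ι]

theorem tie_null (a b : ι) (hab : a ≠ b) :
    (Measure.pi fun _ : ι => (volume : Measure ℝ).restrict (Set.Icc 0 1)) {ω | ω a = ω b} = 0 := by
  classical
  rw [← Measure.restrict_pi_pi]
  refine measure_mono_null (t := {ω : ι → ℝ | ω a = ω b}) le_rfl ?_
  refine Measure.absolutelyContinuous_of_le Measure.restrict_le_self ?_
  let p : Submodule ℝ (ι → ℝ) :=
    LinearMap.ker (LinearMap.proj (R := ℝ) (φ := fun _ : ι => ℝ) a - LinearMap.proj (R := ℝ) (φ := fun _ : ι => ℝ) b)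
  have hp : {ω : ι → ℝ | ω a = ω b} = (p : Set (ι → ℝ)) := by
    ext ω; simp [p, sub_eq_zero]
  rw [hp]
  refine Measure.addHaar_submodule _ p ?_
  intro h
  have : (Pi.single a 1 : ι → ℝ) ∈ p := by rw [h]; trivial
  simp [p, hab.symm] at this

theorem perm_preserving (g : Equiv.Perm ι) :
    MeasurePreserving (fun ω : ι → ℝ => ω ∘ g)
      (Measure.pi fun _ : ι => (volume : Measure ℝ).restrict (Set.Icc 0 1))
      (Measure.pi fun _ : ι => (volume : Measure ℝ).restrict (Set.Icc 0 1)) := by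
  have := measurePreserving_arrowCongr' (fun _ : ι => (volume : Measure ℝ).restrict (Set.Icc 0 1))
    (fun _ : ι => (volume : Measure ℝ).restrict (Set.Icc 0 1)) g.symm (MeasurableEquiv.refl ℝ)
    (fun i => MeasurePreserving.id _)
  exact this

theorem measurableSet_strictMono_comp {k : ℕ} (f : Fin k → ι) :
    MeasurableSet {ω : ι → ℝ | StrictMono (ω ∘ f)} := by
  have : {ω : ι → ℝ | StrictMono (ω ∘ f)} = ⋂ a, ⋂ b, ⋂ (_ : a < b), {ω | ω (f a) < ω (f b)} := by
    ext ω; simp [StrictMono]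
  rw [this]
  refine MeasurableSet.iInter fun a => MeasurableSet.iInter fun b => MeasurableSet.iInter fun _ => ?_
  exact measurableSet_lt (measurable_pi_apply _) (measurable_pi_apply _)

theorem sym_count {k : ℕ} (f : Fin k → ι) (hf : Function.Injective f) (B : Set (ι → ℝ))
    (hm : MeasurableSet B)
    (hB : ∀ g : Equiv.Perm ι, (∀ x, x ∉ Set.range f → g x = x) → ∀ ω, ω ∈ B → ω ∘ g ∈ B) :
    (Measure.pi fun _ : ι => (volume : Measure ℝ).restrict (Set.Icc 0 1)) B =
      (k.factorial : ENNReal) * (Measure.pi fun _ : ι => (volume : Measure ℝ).restrict (Set.Icc 0 1))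
        (B ∩ {ω | StrictMono (ω ∘ f)}) := by
  classical
  set μ := (Measure.pi fun _ : ι => (volume : Measure ℝ).restrict (Set.Icc 0 1)) with hμ
  let D : Equiv.Perm (Fin k) → Set (ι → ℝ) := fun π => B ∩ {ω | StrictMono (ω ∘ (f ∘ π))}
  have hDm : ∀ π, MeasurableSet (D π) := fun π => hm.inter (measurableSet_strictMono_comp _)
  have hD1 : ∀ π, μ (D π) = μ (B ∩ {ω | StrictMono (ω ∘ f)}) := by
    intro π
    let e := Equiv.ofInjective f hf
    let g : Equiv.Perm ι := π.extendDomain e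
    have hg : ∀ a, g (f a) = f (π a) := fun a => Equiv.Perm.extendDomain_apply_image π e a
    have hg0 : ∀ x, x ∉ Set.range f → g x = x := fun x hx =>
      Equiv.Perm.extendDomain_apply_not_subtype π e hx
    have hg1 : ∀ x, x ∉ Set.range f → g.symm x = x := fun x hx => by
      rw [Equiv.symm_apply_eq, hg0 x hx]
    have hpre : D π = (fun ω : ι → ℝ => ω ∘ g) ⁻¹' (B ∩ {ω | StrictMono (ω ∘ f)}) := by
      ext ω
      have h2 : (ω ∘ g) ∘ f = ω ∘ (f ∘ π) := by
        funext a; simp [hg]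
      simp only [D, Set.mem_inter_iff, Set.mem_ofPred_eq, Set.mem_preimage, h2]
      refine and_congr_left fun _ => ⟨hB g hg0 ω, fun h => ?_⟩
      have := hB g.symm hg1 _ h
      simpa [Function.comp_assoc] using this
    rw [hpre]
    exact (perm_preserving g).measure_preimage
      (hm.inter (measurableSet_strictMono_comp _)).nullMeasurableSet
  have hdisj : Pairwise (Function.onFun Disjoint D) := by
    intro π ρ hne
    rw [Function.onFun, Set.disjoint_left]
    rintro ω ⟨_, h1⟩ ⟨_, h2⟩
    apply hne
    have h3 : (ω ∘ f) ∘ π = (ω ∘ f) ∘ ρ :=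
      Tuple.unique_monotone (f := ω ∘ f) h1.monotone h2.monotone
    have hinj : Function.Injective (ω ∘ f) := by
      have h4 : Function.Injective ((ω ∘ f) ∘ π) := h1.injective
      intro a b hab
      have := @h4 (π.symm a) (π.symm b) (by simpa using hab)
      simpa using this
    ext1 a
    exact hinj (congrFun h3 a)
  have hU : μ B = μ (⋃ π, D π) := by
    refine measure_congr ?_
    have hall : ∀ᵐ ω ∂μ, ∀ a b : ι, a ≠ b → ω a ≠ ω b := by
      rw [ae_all_iff]; intro a
      rw [ae_all_iff]; intro b
      by_cases hab : a = b
      · simp [hab]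
      · have : ∀ᵐ ω ∂μ, ¬ (ω a = ω b) := by
          rw [ae_iff]; simpa using tie_null a b hab
        filter_upwards [this] with ω h _ using h
    filter_upwards [hall] with ω hω
    apply propext
    change ω ∈ B ↔ ω ∈ ⋃ π, D π
    rw [Set.mem_iUnion]
    refine ⟨fun h => ⟨Tuple.sort (ω ∘ f), h, ?_⟩, fun ⟨π, h⟩ => h.1⟩
    have h1 := Tuple.monotone_sort (ω ∘ f)
    refine h1.strictMono_of_injective ?_
    intro a b hab
    by_contra hne
    exact hω _ _ (fun h => hne ((Tuple.sort (ω ∘ f)).injective (hf h))) hab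
  rw [hU, measure_iUnion hdisj hDm, tsum_fintype, Finset.sum_congr rfl (fun π _ => hD1 π)]
  simp [Fintype.card_perm]

set_option maxHeartbeats 1000000 in
theorem chain_prob (p q : ℕ → ι) (n i m : ℕ) (him : i + m ≤ n)
    (hpinj : ∀ a < n, ∀ b < n, p a = p b → a = b)
    (hqinj : ∀ a < n, ∀ b < n, q a = q b → a = b)
    (hpq : ∀ a < n, ∀ b < n, p a = q b → a = b ∧ ¬ (i ≤ a ∧ a < i + m))
    (heq : ∀ a < n, ¬ (i ≤ a ∧ a < i + m) → p a = q a) :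
    ((Measure.pi fun _ : ι => (volume : Measure ℝ).restrict (Set.Icc 0 1))
      {ω | (StrictMono fun j : Fin n => ω (p j)) ∧ StrictMono fun j : Fin n => ω (q j)}).toReal
      = ((2 * m).factorial : ℝ) / (m.factorial * m.factorial * (n + m).factorial) := by
  classical
  set μ := (Measure.pi fun _ : ι => (volume : Measure ℝ).restrict (Set.Icc 0 1)) with hμ
  let κ : ℕ → ℕ := fun a => if i ≤ a ∧ a < i + m then i else a
  let T : ℕ → Set ι := fun c => {x | ∃ a < n, κ a = c ∧ (x = p a ∨ x = q a)}
  let B : Set (ι → ℝ) := {ω | ∀ c d, c < d → ∀ x ∈ T c, ∀ y ∈ T d, ω x < ω y}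
  have hTdisj : ∀ c d x, x ∈ T c → x ∈ T d → c = d := by
    rintro c d x ⟨a, ha, rfl, hxa⟩ ⟨b, hb, rfl, hxb⟩
    have : a = b := by
      rcases hxa with h | h <;> rcases hxb with h' | h'
      · exact hpinj a ha b hb (h ▸ h')
      · exact (hpq a ha b hb (h ▸ h')).1
      · exact (hpq b hb a ha (h' ▸ h)).1.symm
      · exact hqinj a ha b hb (h ▸ h')
    rw [this]
  have hmeas : MeasurableSet B := by
    have : B = ⋂ c, ⋂ d, ⋂ (_ : c < d), ⋂ x, ⋂ (_ : x ∈ T c), ⋂ y, ⋂ (_ : y ∈ T d),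
        {ω | ω x < ω y} := by
      ext ω; simp [B]
    rw [this]
    have := Finite.to_countable (α := ι)
    refine MeasurableSet.iInter fun c => MeasurableSet.iInter fun d => MeasurableSet.iInter fun _ =>
      MeasurableSet.iInter fun x => MeasurableSet.iInter fun _ => MeasurableSet.iInter fun y =>
      MeasurableSet.iInter fun _ => ?_
    exact measurableSet_lt (measurable_pi_apply _) (measurable_pi_apply _)
  have hgT : ∀ (S : Set ι), S ⊆ T i → ∀ g : Equiv.Perm ι, (∀ x, x ∉ S → g x = x) →
      ∀ c x, x ∈ T c → g x ∈ T c := by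
    intro S hS g hg c x hx
    by_cases hxS : x ∈ S
    · have hc : c = i := hTdisj _ _ x hx (hS hxS)
      subst hc
      apply hS
      by_contra hgx
      have := g.injective (hg _ hgx)
      rw [this] at hgx
      exact hgx hxS
    · rw [hg x hxS]; exact hx
  have hinv : ∀ (S : Set ι), S ⊆ T i → ∀ g : Equiv.Perm ι, (∀ x, x ∉ S → g x = x) →
      ∀ ω, ω ∈ B → ω ∘ g ∈ B := by
    intro S hS g hg ω hω c d hcd x hx y hy
    exact hω c d hcd _ (hgT S hS g hg c x hx) _ (hgT S hS g hg d y hy)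
  let f1 : Fin (n + m) → ι := fun t => if t.1 < i + m then p t else q (t - m)
  let f2 : Fin (2 * m) → ι := fun t => if t.1 < m then p (i + t) else q (i + t - m)
  let f3 : Fin m → ι := fun t => p (i + t)
  let f4 : Fin m → ι := fun t => q (i + t)
  have hκI : ∀ t < m, κ (i + t) = i := fun t ht => by simp only [κ]; split_ifs <;> omega
  have hf3T : Set.range f3 ⊆ T i := by
    rintro _ ⟨t, rfl⟩
    exact ⟨i + t, by omega, hκI t t.2, Or.inl rfl⟩
  have hf4T : Set.range f4 ⊆ T i := by
    rintro _ ⟨t, rfl⟩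
    exact ⟨i + t, by omega, hκI t t.2, Or.inr rfl⟩
  have hf2T : Set.range f2 ⊆ T i := by
    rintro _ ⟨t, rfl⟩
    have := t.2
    by_cases h : t.1 < m
    · exact ⟨i + t, by omega, hκI t h, Or.inl (by simp [f2, h])⟩
    · refine ⟨i + (t - m), by omega, hκI _ (by omega), Or.inr ?_⟩
      have : i + t.1 - m = i + (t - m) := by omega
      simp [f2, h, this]
  have hf3 : Function.Injective f3 := by
    intro a b h
    have := hpinj _ (by omega) _ (by omega) h
    ext; omega
  have hf4 : Function.Injective f4 := by
    intro a b h
    have := hqinj _ (by omega) _ (by omega) h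
    ext; omega
  have hf2 : Function.Injective f2 := by
    intro a b h
    have ha := a.2
    have hb := b.2
    simp only [f2] at h
    ext
    split_ifs at h with h1 h2 h2
    · have := hpinj _ (by omega) _ (by omega) h; omega
    · have := hpq _ (by omega) _ (by omega) h; omega
    · have := hpq _ (by omega) _ (by omega) h.symm; omega
    · have := hqinj _ (by omega) _ (by omega) h; omega
  have hf1 : Function.Injective f1 := by
    intro a b h
    have ha := a.2
    have hb := b.2
    simp only [f1] at h
    ext
    split_ifs at h with h1 h2 h2
    · have := hpinj _ (by omega) _ (by omega) h; omega
    · have := hpq _ (by omega) _ (by omega) h; omega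
    · have := hpq _ (by omega) _ (by omega) h.symm; omega
    · have := hqinj _ (by omega) _ (by omega) h; omega
  -- total order
  have e1 := sym_count f1 hf1 Set.univ MeasurableSet.univ (fun _ _ _ _ => trivial)
  have e2 := sym_count f2 hf2 B hmeas (hinv _ hf2T)
  have e3 := sym_count f3 hf3 B hmeas (hinv _ hf3T)
  have e4 := sym_count f4 hf4 (B ∩ {ω | StrictMono (ω ∘ f3)})
    (hmeas.inter (measurableSet_strictMono_comp _)) (by
      rintro g hg ω ⟨h1, h2⟩
      refine ⟨hinv _ hf4T g hg ω h1, ?_⟩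
      have : (ω ∘ g) ∘ f3 = ω ∘ f3 := by
        funext t
        have : f3 t ∉ Set.range f4 := by
          rintro ⟨r, hr⟩
          have h := hpq (i + t) (by omega) (i + r) (by omega) hr.symm
          exact h.2 ⟨by omega, by omega⟩
        simp [hg _ this]
      simpa [this] using h2)
  have hset1 : Set.univ ∩ {ω : ι → ℝ | StrictMono (ω ∘ f1)} = B ∩ {ω | StrictMono (ω ∘ f2)} := by
    ext ω
    simp only [Set.univ_inter, Set.mem_ofPred_eq, Set.mem_inter_iff]
    constructor
    · intro h
      have key : ∀ c x, x ∈ T c → ∃ t : Fin (n + m), f1 t = x ∧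
          ((t.1 < i ∧ c = t) ∨ (i ≤ t.1 ∧ t.1 < i + 2 * m ∧ c = i ∧ 0 < m) ∨
            (i + 2 * m ≤ t.1 ∧ c = t - m)) := by
        rintro c x ⟨a, ha, rfl, hx⟩
        by_cases haI : i ≤ a ∧ a < i + m
        · have hκ : κ a = i := by simp [κ, haI]
          rcases hx with rfl | rfl
          · refine ⟨⟨a, by omega⟩, by simp [f1, haI.2], Or.inr (Or.inl ?_)⟩
            exact ⟨haI.1, by have := haI.2; change a < _; omega, hκ, by omega⟩
          · refine ⟨⟨a + m, by omega⟩, ?_, Or.inr (Or.inl ?_)⟩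
            · have : ¬ (a + m < i + m) := by omega
              simp [f1]; omega
            · exact ⟨by change i ≤ a + m; omega, by change a + m < _; omega, hκ, by omega⟩
        · have hκ : κ a = a := by simp only [κ, if_neg haI]
          have hx : x = p a := by rcases hx with h | h; exacts [h, h.trans (heq a ha haI).symm]
          by_cases hai : a < i
          · refine ⟨⟨a, by omega⟩, ?_, Or.inl ⟨hai, by simp [hκ]⟩⟩
            simp [f1, hx]; omega
          · refine ⟨⟨a + m, by omega⟩, ?_, Or.inr (Or.inr ⟨by simp; omega, by simp [hκ]⟩)⟩
            have : ¬ (a + m < i + m) := by omega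
            simp [f1, hx, heq a ha haI]; omega
      refine ⟨?_, ?_⟩
      · intro c d hcd x hx y hy
        obtain ⟨t, rfl, ht⟩ := key c x hx
        obtain ⟨r, rfl, hr⟩ := key d y hy
        refine h (show t.1 < r.1 from ?_)
        omega
      · intro a b hab
        have ha := a.2
        have hb := b.2
        have hff : ∀ a : Fin (2 * m), f2 a = f1 ⟨i + a, by omega⟩ := by
          intro a; simp [f1, f2]
        simp only [Function.comp, hff]
        exact h (show i + a.1 < i + b.1 from by have : a.1 < b.1 := hab
                                                omega)
    · rintro ⟨hBω, h2⟩ t r htr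
      have htr' : t.1 < r.1 := htr
      have ht := t.2
      have hr := r.2
      let K : ℕ → ℕ := fun t => if t < i then t else if t < i + 2 * m then i else t - m
      have key : ∀ t : Fin (n + m), f1 t ∈ T (K t) := by
        intro t
        have ht := t.2
        by_cases h : t.1 < i + m
        · refine ⟨t, by omega, ?_, Or.inl (by simp [f1, h])⟩
          simp only [κ, K]; split_ifs <;> omega
        · refine ⟨t - m, by omega, ?_, Or.inr (by simp [f1, h])⟩
          simp only [κ, K]; split_ifs <;> omega
      by_cases hK : K t < K r
      · exact hBω _ _ hK _ (key t) _ (key r)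
      · have : i ≤ t.1 ∧ r.1 < i + 2 * m := by
          simp only [K] at hK; split_ifs at hK <;> omega
        have h := @h2 ⟨t - i, by omega⟩ ⟨r - i, by omega⟩ (by simp only [Fin.mk_lt_mk]; omega)
        have hff : ∀ (s : Fin (n + m)) (h1 : i ≤ s.1) (h2 : s.1 < i + 2 * m),
            f2 ⟨s - i, by omega⟩ = f1 s := by
          intro s h1 h2
          have h3 : i + (s.1 - i) = s := by omega
          have h4 : (s.1 - i < m) ↔ s.1 < i + m := by omega
          simp [f1, f2, h3, h4]
        simp only [Function.comp, hff t this.1 (by omega), hff r (by omega) this.2] at h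
        exact h
  have hset2 : {ω : ι → ℝ | (StrictMono fun j : Fin n => ω (p j)) ∧ StrictMono fun j : Fin n => ω (q j)}
      = (B ∩ {ω | StrictMono (ω ∘ f3)}) ∩ {ω | StrictMono (ω ∘ f4)} := by
    ext ω
    simp only [Set.mem_ofPred_eq, Set.mem_inter_iff]
    constructor
    · rintro ⟨hp, hq⟩
      refine ⟨⟨?_, ?_⟩, ?_⟩
      · rintro c d hcd x ⟨a, ha, rfl, hx⟩ y ⟨b, hb, rfl, hy⟩
        have hab : a < b := by simp only [κ] at hcd; split_ifs at hcd <;> omega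
        have hP : ω (p a) < ω (p b) := @hp ⟨a, ha⟩ ⟨b, hb⟩ hab
        have hQ : ω (q a) < ω (q b) := @hq ⟨a, ha⟩ ⟨b, hb⟩ hab
        by_cases haI : i ≤ a ∧ a < i + m
        · have hbI : ¬ (i ≤ b ∧ b < i + m) := by
            intro hbI; simp [κ, haI, hbI] at hcd
          have := heq b hb hbI
          rcases hx with rfl | rfl <;> rcases hy with rfl | rfl
          · exact hP
          · rw [← this]; exact hP
          · rw [this]; exact hQ
          · exact hQ
        · have := heq a ha haI
          rcases hx with rfl | rfl <;> rcases hy with rfl | rfl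
          · exact hP
          · rw [this]; exact hQ
          · rw [← this]; exact hP
          · exact hQ
      · intro a b hab
        exact @hp ⟨i + a, by omega⟩ ⟨i + b, by omega⟩ (by simpa using hab)
      · intro a b hab
        exact @hq ⟨i + a, by omega⟩ ⟨i + b, by omega⟩ (by simpa using hab)
    · rintro ⟨⟨hBω, h3⟩, h4⟩
      have key : ∀ a b : Fin n, a < b → ¬ (κ a < κ b) → (i ≤ a.1 ∧ a.1 < i + m) ∧ (i ≤ b.1 ∧ b.1 < i + m) := by
        intro a b hab h
        have hab : a.1 < b.1 := hab
        simp only [κ] at h; split_ifs at h <;> omega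
      constructor
      · intro a b hab
        by_cases hK : κ a < κ b
        · exact hBω _ _ hK _ ⟨a, a.2, rfl, Or.inl rfl⟩ _ ⟨b, b.2, rfl, Or.inl rfl⟩
        · obtain ⟨h5, h6⟩ := key a b hab hK
          have hab' : a.1 < b.1 := hab
          have h := @h3 ⟨a - i, by omega⟩ ⟨b - i, by omega⟩ (by simp only [Fin.mk_lt_mk]; omega)
          have h7 : i + (a.1 - i) = a := by omega
          have h8 : i + (b.1 - i) = b := by omega
          simpa [f3, h7, h8] using h
      · intro a b hab
        by_cases hK : κ a < κ b
        · exact hBω _ _ hK _ ⟨a, a.2, rfl, Or.inr rfl⟩ _ ⟨b, b.2, rfl, Or.inr rfl⟩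
        · obtain ⟨h5, h6⟩ := key a b hab hK
          have hab' : a.1 < b.1 := hab
          have h := @h4 ⟨a - i, by omega⟩ ⟨b - i, by omega⟩ (by simp only [Fin.mk_lt_mk]; omega)
          have h7 : i + (a.1 - i) = a := by omega
          have h8 : i + (b.1 - i) = b := by omega
          simpa [f4, h7, h8] using h
  have huniv : μ Set.univ = 1 := by rw [hμ, Measure.pi_univ]; simp
  rw [← hμ] at e1 e2 e3 e4
  rw [huniv, hset1] at e1
  rw [hset2]
  have r1 := congrArg ENNReal.toReal e1
  have r2 := congrArg ENNReal.toReal e2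
  have r3 := congrArg ENNReal.toReal e3
  have r4 := congrArg ENNReal.toReal e4
  simp only [ENNReal.toReal_mul, ENNReal.toReal_natCast, ENNReal.toReal_one] at r1 r2 r3 r4
  have hm0 : (m.factorial : ℝ) ≠ 0 := by positivity
  have hn0 : ((n + m).factorial : ℝ) ≠ 0 := by positivity
  rw [eq_div_iff (by positivity)]
  rw [r4, r2] at r3
  linear_combination (-((n + m).factorial : ℝ)) * r3 - ((2 * m).factorial : ℝ) * r1

end Sym

end RandomHypercube

namespace RandomHypercube

theorem card_initSeg (n : ℕ) (σ : Equiv.Perm (Fin n)) (j : Fin n) : (initSeg n σ j).card = j := by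
  rw [initSeg, Finset.card_image_of_injective _ σ.injective]
  have : (Finset.univ.filter fun i => i < j) = Finset.Iio j := by ext; simp
  rw [this, Fin.card_Iio]

theorem pathEdge_level {n : ℕ} {σ σ' : Equiv.Perm (Fin n)} {a b : Fin n}
    (h : pathEdge n σ a = pathEdge n σ' b) : a = b := by
  have h1 := congrArg (fun e => e.1.card) h
  simp only [pathEdge, card_initSeg] at h1
  exact Fin.ext h1

/-- complement of the interval -/
def outI (n i m : ℕ) : Finset (Fin n) :=
  Finset.univ.filter fun j => ¬ (i ≤ j.1 ∧ j.1 < i + m)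

theorem pairProb_eq (n i m : ℕ) (hn : 0 < n) (him : i + m ≤ n) (σ σ' : Equiv.Perm (Fin n))
    (h : sharedSteps n σ σ' = outI n i m) :
    pairProb n σ σ' = ((2 * m).factorial : ℝ) / (m.factorial * m.factorial * (n + m).factorial) := by
  let p : ℕ → EdgeIdx n := fun j => if h : j < n then pathEdge n σ ⟨j, h⟩ else (∅, ⟨0, hn⟩)
  let q : ℕ → EdgeIdx n := fun j => if h : j < n then pathEdge n σ' ⟨j, h⟩ else (∅, ⟨0, hn⟩)
  have hp : ∀ a (ha : a < n), p a = pathEdge n σ ⟨a, ha⟩ := fun a ha => by simp [p, ha]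
  have hq : ∀ a (ha : a < n), q a = pathEdge n σ' ⟨a, ha⟩ := fun a ha => by simp [q, ha]
  have hsh : ∀ j : Fin n, pathEdge n σ j = pathEdge n σ' j ↔ ¬ (i ≤ j.1 ∧ j.1 < i + m) := by
    intro j
    have := Finset.ext_iff.1 h j
    simpa only [sharedSteps, outI, Finset.mem_filter, Finset.mem_univ, true_and] using this
  have key := chain_prob p q n i m him
    (fun a ha b hb hab => by
      rw [hp a ha, hp b hb] at hab; exact congrArg Fin.val (pathEdge_level hab))
    (fun a ha b hb hab => by
      rw [hq a ha, hq b hb] at hab; exact congrArg Fin.val (pathEdge_level hab))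
    (fun a ha b hb hab => by
      rw [hp a ha, hq b hb] at hab
      have e := pathEdge_level hab
      rw [← e] at hab
      exact ⟨congrArg Fin.val e, (hsh _).1 hab⟩)
    (fun a ha hab => by
      rw [hp a ha, hq a ha]; exact (hsh _).2 hab)
  rw [← key, pairProb, cubeMeasure]
  have e1 : ∀ j : Fin n, p j = pathEdge n σ j := fun j => hp j j.2
  have e2 : ∀ j : Fin n, q j = pathEdge n σ' j := fun j => hq j j.2
  simp only [e1, e2, Accessible]

/-- nonzero gaps with a general starting point -/
def ngap (n b : ℕ) (l : List ℕ) : ℕ :=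
  ((List.zipWith (fun a b => b - a) (b :: l.map (· + 1)) (l ++ [n])).filter (· != 0)).length

theorem ngap_nil (n b : ℕ) : ngap n b [] = if n - b = 0 then 0 else 1 := by
  simp only [ngap, List.map_nil, List.nil_append, List.zipWith_cons_cons, List.zipWith_nil_left]
  split_ifs with h <;> simp [h]

theorem ngap_cons (n b a : ℕ) (l : List ℕ) :
    ngap n b (a :: l) = (if a - b = 0 then 0 else 1) + ngap n (a + 1) l := by
  simp only [ngap, List.map_cons, List.cons_append, List.zipWith_cons_cons, List.filter_cons]
  split_ifs with h1 h2 h2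
  · simp [h2] at h1
  · simp; ring
  · simp
  · simp [h2] at h1

theorem ngap_zero (n : ℕ) (l : List ℕ) : ∀ b, l.Pairwise (· < ·) → (∀ x ∈ l, b ≤ x ∧ x < n) →
    (ngap n b l = 0 ↔ ∀ x, b ≤ x → x < n → x ∈ l) := by
  induction l with
  | nil =>
    intro b _ _
    rw [ngap_nil]
    constructor
    · intro h x h1 h2
      split_ifs at h; omega
    · intro h
      have := h b le_rfl
      simp at this
      simp; omega
  | cons a l ih =>
    intro b hp hl
    have ha := hl a (by simp)
    rw [List.pairwise_cons] at hp
    rw [ngap_cons, Nat.add_eq_zero_iff, ih (a + 1) hp.2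
      (fun x hx => ⟨hp.1 x hx, (hl x (by simp [hx])).2⟩)]
    constructor
    · rintro ⟨h1, h2⟩ x hx1 hx2
      split_ifs at h1
      rw [List.mem_cons]
      by_cases hxa : x = a
      · exact Or.inl hxa
      · exact Or.inr (h2 x (by omega) hx2)
    · intro h
      constructor
      · have := h b le_rfl (by omega)
        rw [List.mem_cons] at this
        rcases this with h' | h'
        · simp [h']
        · have := hp.1 b h'
          omega
      · intro x hx1 hx2
        have := h x (by omega) hx2
        rw [List.mem_cons] at this
        rcases this with h' | h'
        · omega
        · exact h'

theorem ngap_one (n : ℕ) (l : List ℕ) : ∀ b, l.Pairwise (· < ·) → (∀ x ∈ l, b ≤ x ∧ x < n) →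
    (ngap n b l = 1 ↔ ∃ i m, b ≤ i ∧ 0 < m ∧ i + m ≤ n ∧
      ∀ x, b ≤ x → x < n → (x ∈ l ↔ ¬ (i ≤ x ∧ x < i + m))) := by
  induction l with
  | nil =>
    intro b _ _
    rw [ngap_nil]
    constructor
    · intro h
      refine ⟨b, n - b, le_rfl, ?_, ?_, ?_⟩
      · split_ifs at h; omega
      · split_ifs at h; omega
      · intro x h1 h2
        simp; omega
    · rintro ⟨i, m, h1, h2, h3, _⟩
      rw [if_neg]; omega
  | cons a l ih =>
    intro b hp hl
    have ha := hl a (by simp)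
    rw [List.pairwise_cons] at hp
    have hl' : ∀ x ∈ l, a + 1 ≤ x ∧ x < n := fun x hx => ⟨hp.1 x hx, (hl x (by simp [hx])).2⟩
    rw [ngap_cons]
    by_cases hab : a = b
    · subst hab
      simp only [Nat.sub_self, if_true, Nat.zero_add]
      rw [ih (a + 1) hp.2 hl']
      constructor
      · rintro ⟨i, m, h1, h2, h3, h4⟩
        refine ⟨i, m, by omega, h2, h3, fun x hx1 hx2 => ?_⟩
        rw [List.mem_cons]
        by_cases hxa : x = a
        · simp only [hxa, true_or, true_iff]; omega
        · simp only [hxa, false_or]; exact h4 x (by omega) hx2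
      · rintro ⟨i, m, h1, h2, h3, h4⟩
        have h5 := (h4 a le_rfl ha.2).1 (by simp)
        refine ⟨i, m, by omega, h2, h3, fun x hx1 hx2 => ?_⟩
        rw [← h4 x (by omega) hx2, List.mem_cons]
        have hxa : x ≠ a := by omega
        simp [hxa]
    · rw [if_neg (by omega)]
      have : 1 + ngap n (a + 1) l = 1 ↔ ngap n (a + 1) l = 0 := by omega
      rw [this, ngap_zero n l (a + 1) hp.2 hl']
      constructor
      · intro h
        refine ⟨b, a - b, le_rfl, by omega, by omega, fun x hx1 hx2 => ?_⟩
        rw [List.mem_cons]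
        constructor
        · rintro (h' | h')
          · omega
          · have := hp.1 x h'; omega
        · intro h'
          by_cases hxa : x = a
          · exact Or.inl hxa
          · exact Or.inr (h x (by omega) hx2)
      · rintro ⟨i, m, h1, h2, h3, h4⟩ x hx1 hx2
        have hb : b ∉ a :: l := by
          rw [List.mem_cons]
          rintro (h' | h')
          · omega
          · have := hp.1 b h'; omega
        have h5 := (h4 b le_rfl (by omega))
        have h6 := (h4 a ha.1 ha.2).1 (by simp)
        have h7 : i ≤ b ∧ b < i + m := by
          by_contra h'; exact hb (h5.2 h')
        have := (h4 x (by omega) hx2).2 (by omega)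
        rw [List.mem_cons] at this
        rcases this with h' | h'
        · omega
        · exact h'

theorem numGaps_one_iff (n : ℕ) (σ σ' : Equiv.Perm (Fin n)) :
    numGaps n σ σ' = 1 ↔ ∃ i m, 0 < m ∧ i + m ≤ n ∧ sharedSteps n σ σ' = outI n i m := by
  set l := ((sharedSteps n σ σ').sort (· ≤ ·)).map Fin.val with hl
  have h1 : numGaps n σ σ' = ngap n 0 l := rfl
  have hmem : ∀ x (hx : x < n), x ∈ l ↔ (⟨x, hx⟩ : Fin n) ∈ sharedSteps n σ σ' := by
    intro x hx
    rw [hl, List.mem_map]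
    constructor
    · rintro ⟨y, hy, rfl⟩
      simpa using hy
    · intro h
      exact ⟨⟨x, hx⟩, by simpa using h, rfl⟩
  rw [h1, ngap_one n l 0 ?_ ?_]
  · constructor
    · rintro ⟨i, m, _, h2, h3, h4⟩
      refine ⟨i, m, h2, h3, ?_⟩
      ext j
      rw [← hmem j.1 j.2, h4 j (by omega) j.2]
      simp [outI]
    · rintro ⟨i, m, h2, h3, h4⟩
      refine ⟨i, m, by omega, h2, h3, fun x _ hx => ?_⟩
      rw [hmem x hx, h4]
      simp [outI]
  · rw [hl, List.pairwise_map]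
    exact (Finset.sortedLT_sort (sharedSteps n σ σ')).pairwise
  · intro x hx
    rw [hl, List.mem_map] at hx
    obtain ⟨y, _, rfl⟩ := hx
    exact ⟨by omega, y.2⟩

theorem card_interval (n i m : ℕ) (him : i + m ≤ n) :
    Fintype.card {x : Fin n // i ≤ x.1 ∧ x.1 < i + m} = m := by
  have e : {x : Fin n // i ≤ x.1 ∧ x.1 < i + m} ≃ Fin m :=
    { toFun := fun x => ⟨x.1.1 - i, by have := x.2; omega⟩
      invFun := fun y => ⟨⟨i + y, by omega⟩, by simp⟩
      left_inv := fun x => by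
        ext; have := x.2; simp; omega
      right_inv := fun y => by ext; simp }
  rw [Fintype.card_congr e, Fintype.card_fin]

theorem card_outI (n i m : ℕ) (him : i + m ≤ n) : (outI n i m).card = n - m := by
  have h1 : outI n i m = (Finset.univ.filter fun j : Fin n => (i ≤ j.1 ∧ j.1 < i + m))ᶜ := by
    ext; simp [outI]
  rw [h1, Finset.card_compl, ← Fintype.card_subtype, card_interval n i m him, Fintype.card_fin]

theorem outI_inj (n i i' m : ℕ) (hm : 0 < m) (h1 : i + m ≤ n) (h2 : i' + m ≤ n)
    (h : outI n i m = outI n i' m) : i = i' := by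
  have a := Finset.ext_iff.1 h ⟨i, by omega⟩
  have b := Finset.ext_iff.1 h ⟨i', by omega⟩
  simp only [outI, Finset.mem_filter, Finset.mem_univ, true_and] at a b
  omega

theorem sharedSteps_mul (n : ℕ) (σ τ : Equiv.Perm (Fin n)) :
    sharedSteps n σ (σ * τ) = sharedSteps n 1 τ := by
  ext j
  simp only [sharedSteps, Finset.mem_filter, Finset.mem_univ, true_and, pathEdge, Prod.mk.injEq,
    initSeg]
  have h1 : ∀ S : Finset (Fin n), S.image (σ * τ) = (S.image τ).image σ := by
    intro S; rw [Finset.image_image]; rfl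
  have h2 : ∀ S : Finset (Fin n), S.image (1 : Equiv.Perm (Fin n)) = S := by
    intro S; ext; simp
  rw [h1, h2, (Finset.image_injective σ.injective).eq_iff]
  simp

/-- relative permutations with prescribed gap -/
def relP (n i m : ℕ) : Finset (Equiv.Perm (Fin n)) :=
  Finset.univ.filter fun τ => sharedSteps n 1 τ = outI n i m

theorem card_pairs (n i m : ℕ) :
    (Finset.univ.filter fun p : Equiv.Perm (Fin n) × Equiv.Perm (Fin n) =>
      sharedSteps n p.1 p.2 = outI n i m).card = n.factorial * (relP n i m).card := by
  have h : (Finset.univ : Finset (Equiv.Perm (Fin n))).card = n.factorial := by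
    rw [Finset.card_univ, Fintype.card_perm, Fintype.card_fin]
  rw [← h, ← Finset.card_product]
  refine Finset.card_nbij' (fun p => (p.1, p.1⁻¹ * p.2)) (fun p => (p.1, p.1 * p.2)) ?_ ?_ ?_ ?_
  · rintro ⟨σ, σ'⟩ hp
    simp only [Finset.coe_filter, Finset.mem_univ, true_and, Set.mem_ofPred_eq] at hp
    have := sharedSteps_mul n σ (σ⁻¹ * σ')
    simp only [mul_inv_cancel_left] at this
    simp [relP, ← this, hp]
  · rintro ⟨σ, τ⟩ hp
    simp [relP] at hp
    simp [sharedSteps_mul, hp]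
  · rintro ⟨σ, σ'⟩ _; simp
  · rintro ⟨σ, σ'⟩ _; simp

theorem c_eq (n s : ℕ) (hs : s < n) :
    c n s 1 = ∑ i ∈ Finset.range (s + 1), (n.factorial : ℝ) * (relP n i (n - s)).card *
      (((2 * (n - s)).factorial : ℝ) /
        ((n - s).factorial * (n - s).factorial * (n + (n - s)).factorial)) := by
  classical
  have hset : (Finset.univ.filter
      (fun p : Equiv.Perm (Fin n) × Equiv.Perm (Fin n) =>
        (sharedSteps n p.1 p.2).card = s ∧ numGaps n p.1 p.2 = 1)) =
      (Finset.range (s + 1)).biUnion fun i => Finset.univ.filter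
        fun p : Equiv.Perm (Fin n) × Equiv.Perm (Fin n) =>
          sharedSteps n p.1 p.2 = outI n i (n - s) := by
    ext p
    simp only [Finset.mem_filter, Finset.mem_univ, true_and, Finset.mem_biUnion, Finset.mem_range,
      numGaps_one_iff]
    constructor
    · rintro ⟨h1, i, m, h2, h3, h4⟩
      rw [h4, card_outI n i m h3] at h1
      have : n - s = m := by omega
      exact ⟨i, by omega, by rw [this]; exact h4⟩
    · rintro ⟨i, hi, h⟩
      refine ⟨?_, i, n - s, by omega, by omega, h⟩
      rw [h, card_outI _ _ _ (by omega)]; omega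
  rw [c, hset, Finset.sum_biUnion]
  · refine Finset.sum_congr rfl fun i hi => ?_
    rw [Finset.mem_range] at hi
    rw [Finset.sum_congr rfl (fun p hp =>
      pairProb_eq n i (n - s) (by omega) (by omega) p.1 p.2 (Finset.mem_filter.1 hp).2),
      Finset.sum_const, card_pairs, nsmul_eq_mul]
    push_cast
    ring
  · intro i hi j hj hij
    rw [Function.onFun, Finset.disjoint_left]
    intro p hp hp'
    have hi := Finset.mem_range.1 hi
    have hj := Finset.mem_range.1 hj
    apply hij
    refine outI_inj n i j (n - s) (by omega) (by omega) (by omega) ?_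
    rw [← (Finset.mem_filter.1 hp).2, ← (Finset.mem_filter.1 hp').2]

theorem c_zero (n s : ℕ) (hs : n ≤ s) : c n s 1 = 0 := by
  rw [c]
  apply Finset.sum_eq_zero
  intro p hp
  exfalso
  obtain ⟨h1, h2⟩ := (Finset.mem_filter.1 hp).2
  rw [numGaps_one_iff] at h2
  obtain ⟨i, m, h2, h3, h4⟩ := h2
  rw [h4, card_outI n i m h3] at h1
  omega

theorem shared_iff (n : ℕ) (τ : Equiv.Perm (Fin n)) (j : Fin n) :
    j ∈ sharedSteps n 1 τ ↔ (∀ x, x < j ↔ τ x < j) ∧ τ j = j := by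
  simp only [sharedSteps, Finset.mem_filter, Finset.mem_univ, true_and, pathEdge, Prod.mk.injEq,
    initSeg]
  have h2 : ∀ S : Finset (Fin n), S.image (1 : Equiv.Perm (Fin n)) = S := by
    intro S; ext; simp
  rw [h2]
  refine and_congr ?_ ?_
  · constructor
    · intro h x
      have := Finset.ext_iff.1 h (τ x)
      simp at this
      exact this.symm
    · intro h
      ext x
      have := h (τ.symm x)
      simp at this
      simp
      rw [← this]
      constructor
      · intro h'; exact ⟨τ.symm x, h', by simp⟩
      · rintro ⟨y, hy, rfl⟩; simpa using hy
  · simp [eq_comm]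

/-- perms fixing everything outside the interval -/
def fixQ (n i m : ℕ) : Finset (Equiv.Perm (Fin n)) :=
  Finset.univ.filter fun τ => ∀ x : Fin n, ¬ (i ≤ x.1 ∧ x.1 < i + m) → τ x = x

theorem card_fixQ (n i m : ℕ) (him : i + m ≤ n) : (fixQ n i m).card = m.factorial := by
  rw [fixQ, ← Fintype.card_subtype,
    ← Fintype.card_congr (Equiv.Perm.subtypeEquivSubtypePerm fun x : Fin n => i ≤ x.1 ∧ x.1 < i + m),
    Fintype.card_perm, card_interval n i m him]

theorem relP_subset (n i m : ℕ) : relP n i m ⊆ fixQ n i m := by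
  intro τ hτ
  simp only [relP, Finset.mem_filter, Finset.mem_univ, true_and] at hτ
  simp only [fixQ, Finset.mem_filter, Finset.mem_univ, true_and]
  intro x hx
  have : x ∈ outI n i m := by simpa [outI] using hx
  rw [← hτ, shared_iff] at this
  exact this.2

theorem card_relP_le (n i m : ℕ) (him : i + m ≤ n) : (relP n i m).card ≤ m.factorial := by
  rw [← card_fixQ n i m him]; exact Finset.card_le_card (relP_subset n i m)

theorem card_relP_one (n i : ℕ) (him : i + 1 ≤ n) : (relP n i 1).card = 0 := by
  rw [Finset.card_eq_zero, Finset.eq_empty_iff_forall_notMem]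
  intro τ hτ
  have h1 := relP_subset n i 1 hτ
  have h2 : (1 : Equiv.Perm (Fin n)) ∈ fixQ n i 1 := by simp [fixQ]
  have h3 : (fixQ n i 1).card ≤ 1 := by rw [card_fixQ n i 1 him]; simp
  have h4 := Finset.card_le_one.1 h3 _ h1 _ h2
  subst h4
  simp only [relP, Finset.mem_filter, Finset.mem_univ, true_and] at hτ
  have h5 : (⟨i, by omega⟩ : Fin n) ∈ sharedSteps n 1 1 := by simp [sharedSteps]
  rw [hτ] at h5
  simp [outI] at h5

theorem fix_maps {n i m : ℕ} {τ : Equiv.Perm (Fin n)} (hτ : τ ∈ fixQ n i m) (x : Fin n) :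
    (i ≤ (τ x).1 ∧ (τ x).1 < i + m) ↔ (i ≤ x.1 ∧ x.1 < i + m) := by
  simp only [fixQ, Finset.mem_filter, Finset.mem_univ, true_and] at hτ
  by_cases hx : (i ≤ x.1 ∧ x.1 < i + m)
  · simp only [hx, and_self, iff_true]
    by_contra h
    have h1 := τ.injective (hτ _ h)
    rw [h1] at h
    exact h hx
  · rw [hτ x hx]

theorem fix_shared {n i m : ℕ} {τ : Equiv.Perm (Fin n)} (hτ : τ ∈ fixQ n i m) :
    outI n i m ⊆ sharedSteps n 1 τ := by
  intro j hj
  have hj' : ¬ (i ≤ j.1 ∧ j.1 < i + m) := by simpa [outI] using hj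
  have hτ' := hτ
  simp only [fixQ, Finset.mem_filter, Finset.mem_univ, true_and] at hτ'
  rw [shared_iff]
  refine ⟨fun x => ?_, hτ' j hj'⟩
  have h1 := fix_maps hτ x
  by_cases hx : (i ≤ x.1 ∧ x.1 < i + m)
  · have h2 := h1.2 hx
    rw [Fin.lt_def, Fin.lt_def]; omega
  · rw [hτ' x hx]

theorem card_bad (n i m : ℕ) (him : i + m ≤ n) (j : Fin n) (hj : i ≤ j.1 ∧ j.1 < i + m) :
    ((fixQ n i m).filter fun τ => j ∈ sharedSteps n 1 τ).card ≤
      (j.1 - i).factorial * (m - 1 - (j.1 - i)).factorial := by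
  classical
  have c1 := card_interval n i (j.1 - i) (by omega)
  have c2 := card_interval n (j.1 + 1) (m - 1 - (j.1 - i)) (by omega)
  have key : ((fixQ n i m).filter fun τ => j ∈ sharedSteps n 1 τ).card ≤
      Fintype.card (Equiv.Perm {x : Fin n // i ≤ x.1 ∧ x.1 < i + (j.1 - i)} ×
        Equiv.Perm {x : Fin n // j.1 + 1 ≤ x.1 ∧ x.1 < j.1 + 1 + (m - 1 - (j.1 - i))}) := by
    rw [← Fintype.card_coe]
    have hA : ∀ τ : {τ // τ ∈ (fixQ n i m).filter fun τ => j ∈ sharedSteps n 1 τ}, ∀ x : Fin n,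
        (i ≤ (τ.1 x).1 ∧ (τ.1 x).1 < i + (j.1 - i)) ↔ (i ≤ x.1 ∧ x.1 < i + (j.1 - i)) := by
      rintro ⟨τ, hτ⟩ x
      obtain ⟨h1, h2⟩ := Finset.mem_filter.1 hτ
      rw [shared_iff] at h2
      have h3 := fix_maps h1 x
      have h4 := h2.1 x
      rw [Fin.lt_def, Fin.lt_def] at h4
      simp only
      omega
    have hB : ∀ τ : {τ // τ ∈ (fixQ n i m).filter fun τ => j ∈ sharedSteps n 1 τ}, ∀ x : Fin n,
        (j.1 + 1 ≤ (τ.1 x).1 ∧ (τ.1 x).1 < j.1 + 1 + (m - 1 - (j.1 - i))) ↔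
          (j.1 + 1 ≤ x.1 ∧ x.1 < j.1 + 1 + (m - 1 - (j.1 - i))) := by
      rintro ⟨τ, hτ⟩ x
      obtain ⟨h1, h2⟩ := Finset.mem_filter.1 hτ
      rw [shared_iff] at h2
      have h3 := fix_maps h1 x
      have h4 := h2.1 x
      rw [Fin.lt_def, Fin.lt_def] at h4
      have h5 : (τ x).1 = j.1 ↔ x.1 = j.1 := by
        rw [← Fin.ext_iff, ← Fin.ext_iff]
        constructor
        · intro h; exact τ.injective (h.trans h2.2.symm)
        · rintro rfl; exact h2.2
      simp only
      omega
    refine Fintype.card_le_of_injective (fun τ => (τ.1.subtypePerm (hA τ), τ.1.subtypePerm (hB τ))) ?_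
    intro τ ρ h
    have e1 := congrArg Prod.fst h
    have e2 := congrArg Prod.snd h
    apply Subtype.ext
    ext1 x
    obtain ⟨t1, t2⟩ := Finset.mem_filter.1 τ.2
    obtain ⟨r1, r2⟩ := Finset.mem_filter.1 ρ.2
    rw [shared_iff] at t2 r2
    by_cases hxA : i ≤ x.1 ∧ x.1 < i + (j.1 - i)
    · have := congrArg (fun f => (f ⟨x, hxA⟩).1) e1
      simpa using this
    · by_cases hxB : j.1 + 1 ≤ x.1 ∧ x.1 < j.1 + 1 + (m - 1 - (j.1 - i))
      · have := congrArg (fun f => (f ⟨x, hxB⟩).1) e2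
        simpa using this
      · by_cases hxj : x = j
        · rw [hxj, t2.2, r2.2]
        · have hxj' : x.1 ≠ j.1 := fun h => hxj (Fin.ext h)
          have hx : ¬ (i ≤ x.1 ∧ x.1 < i + m) := by omega
          simp only [fixQ, Finset.mem_filter, Finset.mem_univ, true_and] at t1 r1
          rw [t1 x hx, r1 x hx]
  rw [Fintype.card_prod, Fintype.card_perm, Fintype.card_perm, c1, c2] at key
  exact key

theorem fact_mul_le (a b : ℕ) : (a + 1).factorial * (b + 1).factorial ≤ (a + b + 1).factorial := by
  induction a with
  | zero => simp
  | succ a ih =>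
    rw [Nat.factorial_succ (a + 1), mul_assoc, show a + 1 + b + 1 = (a + b + 1) + 1 by ring,
      Nat.factorial_succ (a + b + 1)]
    exact Nat.mul_le_mul (by omega) ih

theorem sum_fact_le (M : ℕ) :
    ∑ a ∈ Finset.range (M + 2), a.factorial * (M + 1 - a).factorial ≤ 3 * (M + 1).factorial := by
  rw [Finset.sum_range_succ, Finset.sum_range_succ']
  have h : ∑ a ∈ Finset.range M, (a + 1).factorial * (M + 1 - (a + 1)).factorial ≤
      ∑ a ∈ Finset.range M, M.factorial := by
    refine Finset.sum_le_sum fun a ha => ?_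
    have ha := Finset.mem_range.1 ha
    have h1 := fact_mul_le a (M - a - 1)
    have e1 : M - a - 1 + 1 = M + 1 - (a + 1) := by omega
    have e2 : a + (M - a - 1) + 1 = M := by omega
    rw [e1, e2] at h1
    exact h1
  simp only [Finset.sum_const, Finset.card_range, smul_eq_mul] at h
  have h2 : (M + 1).factorial = (M + 1) * M.factorial := Nat.factorial_succ M
  simp only [Nat.factorial_zero, one_mul, Nat.sub_zero, Nat.sub_self, mul_one]
  nlinarith [Nat.factorial_pos M]

theorem card_relP_ge (n i M : ℕ) (him : i + (M + 2) ≤ n) :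
    (M + 2).factorial ≤ (relP n i (M + 2)).card + 3 * (M + 1).factorial := by
  classical
  rw [← card_fixQ n i (M + 2) him]
  have hsub : fixQ n i (M + 2) ⊆ relP n i (M + 2) ∪
      (Finset.univ.filter fun j : Fin n => i ≤ j.1 ∧ j.1 < i + (M + 2)).biUnion
        fun j => (fixQ n i (M + 2)).filter fun τ => j ∈ sharedSteps n 1 τ := by
    intro τ hτ
    rw [Finset.mem_union]
    by_cases h : τ ∈ relP n i (M + 2)
    · exact Or.inl h
    · right
      have h1 := fix_shared hτ
      have h2 : ¬ (sharedSteps n 1 τ ⊆ outI n i (M + 2)) := by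
        intro h2
        apply h
        simp only [relP, Finset.mem_filter, Finset.mem_univ, true_and]
        exact Finset.Subset.antisymm h2 h1
      rw [Finset.not_subset] at h2
      obtain ⟨j, hj1, hj2⟩ := h2
      rw [Finset.mem_biUnion]
      refine ⟨j, ?_, Finset.mem_filter.2 ⟨hτ, hj1⟩⟩
      simp only [outI, Finset.mem_filter, Finset.mem_univ, true_and, not_not] at hj2 ⊢
      exact hj2
  refine (Finset.card_le_card hsub).trans ((Finset.card_union_le _ _).trans ?_)
  refine Nat.add_le_add_left ?_ _
  refine Finset.card_biUnion_le.trans ?_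
  refine (Finset.sum_le_sum (fun j hj => card_bad n i (M + 2) him j (Finset.mem_filter.1 hj).2)).trans ?_
  refine le_trans (le_of_eq ?_) (sum_fact_le M)
  refine Finset.sum_bij' (fun j _ => j.1 - i)
    (fun a ha => (⟨i + a, by have := Finset.mem_range.1 ha; omega⟩ : Fin n)) ?_ ?_ ?_ ?_ ?_
  · intro j hj
    have := (Finset.mem_filter.1 hj).2
    rw [Finset.mem_range]; omega
  · intro a ha
    have := Finset.mem_range.1 ha
    simp only [Finset.mem_filter, Finset.mem_univ, true_and]; omega
  · intro j hj
    have := (Finset.mem_filter.1 hj).2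
    ext; simp; omega
  · intro a ha; simp
  · intro j hj; simp

end RandomHypercube

namespace RandomHypercube

noncomputable def FF (n m : ℕ) : ℝ :=
  (n.factorial : ℝ) * (2 * m).factorial / (m.factorial * (n + m).factorial)

theorem FF_pos (n m : ℕ) : 0 < FF n m := by unfold FF; positivity

theorem c_nonneg (n s : ℕ) : 0 ≤ c n s 1 :=
  Finset.sum_nonneg fun _ _ => ENNReal.toReal_nonneg

theorem c_le (n s : ℕ) (hs : s < n) : c n s 1 ≤ (s + 1) * FF n (n - s) := by
  rw [c_eq n s hs]
  have : ((s : ℝ) + 1) * FF n (n - s) = ∑ i ∈ Finset.range (s + 1), FF n (n - s) := by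
    simp
  rw [this]
  refine Finset.sum_le_sum fun i hi => ?_
  have hi := Finset.mem_range.1 hi
  have h : ((relP n i (n - s)).card : ℝ) ≤ (n - s).factorial := by
    exact_mod_cast card_relP_le n i (n - s) (by omega)
  calc _ ≤ (n.factorial : ℝ) * (n - s).factorial *
      (((2 * (n - s)).factorial : ℝ) /
        ((n - s).factorial * (n - s).factorial * (n + (n - s)).factorial)) := by gcongr
    _ = FF n (n - s) := by unfold FF; field_simp

theorem c_ge (n s : ℕ) (hs : s + 2 ≤ n) :
    (s + 1) * (FF n (n - s) * (1 - 3 / ((n - s : ℕ) : ℝ))) ≤ c n s 1 := by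
  rw [c_eq n s (by omega)]
  have : ((s : ℝ) + 1) * (FF n (n - s) * (1 - 3 / ((n - s : ℕ) : ℝ))) =
      ∑ i ∈ Finset.range (s + 1), (FF n (n - s) * (1 - 3 / ((n - s : ℕ) : ℝ))) := by
    simp
  rw [this]
  refine Finset.sum_le_sum fun i hi => ?_
  have hi := Finset.mem_range.1 hi
  obtain ⟨M, hM⟩ : ∃ M, n - s = M + 2 := ⟨n - s - 2, by omega⟩
  rw [hM]
  have h : ((M + 2).factorial : ℝ) ≤ (relP n i (M + 2)).card + 3 * (M + 1).factorial := by
    exact_mod_cast card_relP_ge n i M (by omega)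
  have hf : ((M + 2).factorial : ℝ) = (M + 2) * (M + 1).factorial := by
    rw [Nat.factorial_succ (M + 1)]; push_cast; ring
  have h' : ((M + 2).factorial : ℝ) * (1 - 3 / ((M + 2 : ℕ) : ℝ)) ≤ (relP n i (M + 2)).card := by
    have : ((M + 2).factorial : ℝ) * (1 - 3 / ((M + 2 : ℕ) : ℝ)) =
        ((M + 2).factorial : ℝ) - 3 * (M + 1).factorial := by
      rw [hf]; push_cast; field_simp
    linarith
  calc _ = (n.factorial : ℝ) * (((M + 2).factorial : ℝ) * (1 - 3 / ((M + 2 : ℕ) : ℝ))) *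
      (((2 * (M + 2)).factorial : ℝ) /
        ((M + 2).factorial * (M + 2).factorial * (n + (M + 2)).factorial)) := by
        unfold FF; field_simp
    _ ≤ _ := by gcongr

theorem c_pred (n : ℕ) (s : ℕ) (hs : s + 1 = n) : c n s 1 = 0 := by
  rw [c_eq n s (by omega)]
  have h1 : n - s = 1 := by omega
  rw [h1]
  refine Finset.sum_eq_zero fun i hi => ?_
  have hi := Finset.mem_range.1 hi
  rw [card_relP_one n i (by omega)]; simp

theorem FF_succ (n m : ℕ) : FF n (m + 1) = FF n m * (2 * (2 * m + 1) / (n + m + 1)) := by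
  unfold FF
  have e1 : 2 * (m + 1) = 2 * m + 1 + 1 := by ring
  have e2 : n + (m + 1) = n + m + 1 := by ring
  rw [e1, e2, Nat.factorial_succ (2 * m + 1), Nat.factorial_succ (2 * m), Nat.factorial_succ m,
    Nat.factorial_succ (n + m)]
  push_cast
  field_simp
  ring

theorem FF_prod (m s : ℕ) :
    FF (m + s) m = ∏ i ∈ Finset.range s, (((m : ℝ) + i + 1) / (2 * m + i + 1)) := by
  induction s with
  | zero =>
    unfold FF
    rw [Nat.add_zero, ← two_mul, Finset.prod_range_zero]
    exact div_self (by positivity)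
  | succ s ih =>
    rw [Finset.prod_range_succ, ← ih]
    unfold FF
    have e1 : m + (s + 1) = m + s + 1 := by ring
    have e2 : m + s + 1 + m = (m + s + m) + 1 := by ring
    rw [e1, e2, Nat.factorial_succ (m + s), Nat.factorial_succ (m + s + m)]
    push_cast
    have : (m : ℝ) + s + m + 1 = 2 * m + s + 1 := by ring
    rw [this]
    field_simp

theorem FF_le_geom (m s : ℕ) (h : s ≤ 2 * m) : FF (m + s) m ≤ (3 / 4 : ℝ) ^ s := by
  rw [FF_prod]
  calc _ ≤ ∏ i ∈ Finset.range s, (3 / 4 : ℝ) := by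
        refine Finset.prod_le_prod (fun i _ => by positivity) fun i hi => ?_
        have hi := Finset.mem_range.1 hi
        rw [div_le_div_iff₀ (by positivity) (by norm_num)]
        have : (i : ℝ) + 1 ≤ 2 * m := by exact_mod_cast (by omega : i + 1 ≤ 2 * m)
        linarith
    _ = _ := by rw [Finset.prod_const, Finset.card_range]

theorem FF_two (n : ℕ) : FF n 2 = 12 / ((n + 1) * (n + 2)) := by
  have h0 : FF n 0 = 1 := by
    unfold FF
    have : (n.factorial : ℝ) ≠ 0 := by positivity
    simp [this]
  have h1 := FF_succ n 0
  have h2 := FF_succ n 1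
  norm_num at h1 h2
  rw [h2, h1, h0]
  field_simp
  ring

theorem FF_three_le (n m : ℕ) (hm : 3 ≤ m) (h : 3 * m ≤ n + 2) :
    FF n m ≤ 120 / ((n + 1) * (n + 2) * (n + 3)) := by
  induction m, hm using Nat.le_induction with
  | base =>
    have h2 := FF_succ n 2
    norm_num at h2
    rw [h2, FF_two]
    apply le_of_eq
    field_simp
    ring
  | succ m hm ih =>
    refine le_trans ?_ (ih (by omega))
    rw [FF_succ]
    have h1 : (2 * (2 * (m : ℝ) + 1) / (n + m + 1)) ≤ 1 := by
      rw [div_le_one (by positivity)]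
      have : 3 * ((m : ℝ) + 1) ≤ n + 2 := by exact_mod_cast h
      linarith
    exact mul_le_of_le_one_right (FF_pos n m).le h1

theorem FF_tendsto (s : ℕ) : Tendsto (fun n => FF n (n - s)) atTop (nhds ((1 / 2 : ℝ) ^ s)) := by
  have h1 : Tendsto (fun m : ℕ => ∏ i ∈ Finset.range s, (((m : ℝ) + i + 1) / (2 * m + i + 1)))
      atTop (nhds (∏ i ∈ Finset.range s, (1 / 2 : ℝ))) := by
    refine tendsto_finsetProd _ fun i _ => ?_
    have e : (fun m : ℕ => (((m : ℝ) + i + 1) / (2 * m + i + 1))) =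
        fun m : ℕ => 1 / 2 + ((i + 1 : ℝ) / 2) / (2 * m + i + 1) := by
      funext m; field_simp; ring
    rw [e]
    have h2 : Tendsto (fun m : ℕ => (2 * (m : ℝ) + i + 1)) atTop atTop := by
      refine tendsto_atTop_mono (fun m => ?_) tendsto_natCast_atTop_atTop
      have : (0 : ℝ) ≤ m := by positivity
      have : (0 : ℝ) ≤ i := by positivity
      linarith
    have h3 := (tendsto_const_nhds (x := ((i + 1 : ℝ) / 2))).div_atTop h2
    simpa using h3.const_add (1 / 2 : ℝ)
  simp only [Finset.prod_const, Finset.card_range] at h1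
  refine (h1.comp (tendsto_sub_atTop_nat s)).congr' ?_
  filter_upwards [eventually_ge_atTop s] with n hn
  simp only [Function.comp]
  rw [← FF_prod, Nat.sub_add_cancel hn]

theorem c_tendsto (s : ℕ) :
    Tendsto (fun n => c n s 1) atTop (nhds ((s + 1) * (1 / 2 : ℝ) ^ s)) := by
  have h1 := FF_tendsto s
  have h2 : Tendsto (fun n : ℕ => 3 / ((n - s : ℕ) : ℝ)) atTop (nhds 0) :=
    (tendsto_const_nhds (x := (3 : ℝ))).div_atTop
      (tendsto_natCast_atTop_atTop.comp (tendsto_sub_atTop_nat s))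
  have h3 : Tendsto (fun n => ((s : ℝ) + 1) * (FF n (n - s) * (1 - 3 / ((n - s : ℕ) : ℝ)))) atTop
      (nhds ((s + 1) * (1 / 2 : ℝ) ^ s)) := by
    have := (h1.mul (h2.const_sub 1)).const_mul ((s : ℝ) + 1)
    simpa using this
  refine tendsto_of_tendsto_of_tendsto_of_le_of_le' h3 (h1.const_mul ((s : ℝ) + 1)) ?_ ?_
  · filter_upwards [eventually_ge_atTop (s + 2)] with n hn using c_ge n s hn
  · filter_upwards [eventually_ge_atTop (s + 2)] with n hn using c_le n s (by omega)

theorem c_bound (n s : ℕ) (h : s + 3 ≤ n) :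
    c n s 1 ≤ (s + 1) * (3 / 4 : ℝ) ^ s + 120 / ((s : ℝ) + 1) ^ 2 := by
  refine (c_le n s (by omega)).trans ?_
  by_cases hs : s ≤ 2 * (n - s)
  · have h1 := FF_le_geom (n - s) s hs
    rw [Nat.sub_add_cancel (by omega)] at h1
    have h2 : (0 : ℝ) ≤ 120 / ((s : ℝ) + 1) ^ 2 := by positivity
    have h3 : ((s : ℝ) + 1) * FF n (n - s) ≤ (s + 1) * (3 / 4 : ℝ) ^ s := by gcongr
    linarith
  · have h1 := FF_three_le n (n - s) (by omega) (by omega)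
    have h2 : (0 : ℝ) ≤ (s + 1) * (3 / 4 : ℝ) ^ s := by positivity
    have hsn : (s : ℝ) ≤ n := by exact_mod_cast (by omega : s ≤ n)
    have h3 : ((s : ℝ) + 1) * FF n (n - s) ≤ 120 / ((s : ℝ) + 1) ^ 2 := by
      calc ((s : ℝ) + 1) * FF n (n - s) ≤ (s + 1) * (120 / ((n + 1) * (n + 2) * (n + 3))) := by gcongr
        _ ≤ (s + 1) * (120 / ((s + 1) * (s + 1) * (s + 1))) := by
          gcongr <;> linarith
        _ = _ := by field_simp
    linarith

end RandomHypercube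

open RandomHypercube in
/-- For any sequence `k(n) → ∞`, the pair sum over single-gap pairs sharing at most
`k(n)` edges converges to `4` as `n → ∞`. -/
theorem sum_c_one_gap_few_shared_tendsto_four (k : ℕ → ℕ)
    (hk : Tendsto k atTop atTop) :
    Tendsto (fun n : ℕ => ∑ s ∈ Finset.range (k n + 1), c n s 1)
      atTop (nhds 4) := by
  classical
  have hdec : ∀ n, ∑ s ∈ Finset.range (k n + 1), c n s 1 =
      (∑' s, if s ≤ k n ∧ s + 3 ≤ n then c n s 1 else 0) +
        ∑ s ∈ Finset.range (k n + 1), if s + 2 = n then c n s 1 else 0 := by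
    intro n
    rw [tsum_eq_sum (s := Finset.range (k n + 1))]
    · rw [← Finset.sum_add_distrib]
      refine Finset.sum_congr rfl fun s hs => ?_
      have hs := Finset.mem_range.1 hs
      by_cases h3 : s + 3 ≤ n
      · rw [if_pos ⟨by omega, h3⟩, if_neg (by omega), add_zero]
      · rw [if_neg (by omega), zero_add]
        by_cases h2 : s + 2 = n
        · rw [if_pos h2]
        · rw [if_neg h2]
          by_cases h1 : s + 1 = n
          · exact c_pred n s h1
          · exact c_zero n s (by omega)
    · intro s hs
      rw [Finset.mem_range] at hs
      rw [if_neg (by omega)]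
  have hsmall : Tendsto (fun n => ∑ s ∈ Finset.range (k n + 1), if s + 2 = n then c n s 1 else 0)
      atTop (nhds 0) := by
    have hlim : Tendsto (fun n : ℕ => (12 : ℝ) / n) atTop (nhds 0) :=
      (tendsto_const_nhds (x := (12 : ℝ))).div_atTop tendsto_natCast_atTop_atTop
    refine tendsto_of_tendsto_of_tendsto_of_le_of_le' tendsto_const_nhds hlim ?_ ?_
    · refine Eventually.of_forall fun n => Finset.sum_nonneg fun s _ => ?_
      split_ifs
      · exact c_nonneg n s
      · exact le_rfl
    · filter_upwards [eventually_ge_atTop 2] with n hn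
      have e : (∑ s ∈ Finset.range (k n + 1), if s + 2 = n then c n s 1 else 0) =
          ∑ s ∈ Finset.range (k n + 1), if n - 2 = s then c n s 1 else 0 := by
        refine Finset.sum_congr rfl fun s _ => ?_
        have : s + 2 = n ↔ n - 2 = s := by omega
        simp only [this]
      rw [e, Finset.sum_ite_eq]
      have hn0 : (0 : ℝ) < n := by exact_mod_cast (by omega : 0 < n)
      split_ifs
      · refine (c_le n (n - 2) (by omega)).trans ?_
        have e2 : n - (n - 2) = 2 := by omega
        rw [e2, FF_two]
        have h1 : ((n - 2 : ℕ) : ℝ) ≤ n := by exact_mod_cast Nat.sub_le n 2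
        calc (((n - 2 : ℕ) : ℝ) + 1) * (12 / ((n + 1) * (n + 2)))
            ≤ (n + 1) * (12 / ((n + 1) * (n + 2))) := by gcongr
          _ = 12 / (n + 2) := by field_simp
          _ ≤ 12 / n := by gcongr; linarith
      · positivity
  have hgeo : HasSum (fun s : ℕ => ((s : ℝ) + 1) * (1 / 2 : ℝ) ^ s) 4 := by
    have h1 := hasSum_coe_mul_geometric_of_norm_lt_one (r := (1 / 2 : ℝ)) (by norm_num)
    have h2 := hasSum_geometric_of_lt_one (r := (1 / 2 : ℝ)) (by norm_num) (by norm_num)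
    have h3 := h1.add h2
    have e1 : (1 / 2 / (1 - 1 / 2) ^ 2 + (1 - 1 / 2)⁻¹ : ℝ) = 4 := by norm_num
    rw [e1] at h3
    have e2 : (fun s : ℕ => ((s : ℝ) + 1) * (1 / 2 : ℝ) ^ s) =
        fun s : ℕ => (s : ℝ) * (1 / 2 : ℝ) ^ s + (1 / 2 : ℝ) ^ s := by funext s; ring
    rw [e2]
    exact h3
  have hsumm : Summable (fun s : ℕ => ((s : ℝ) + 1) * (3 / 4 : ℝ) ^ s + 120 / ((s : ℝ) + 1) ^ 2) := by
    refine Summable.add ?_ ?_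
    · have h1 := (hasSum_coe_mul_geometric_of_norm_lt_one (r := (3 / 4 : ℝ)) (by norm_num)).summable
      have h2 := (hasSum_geometric_of_lt_one (r := (3 / 4 : ℝ)) (by norm_num) (by norm_num)).summable
      refine (h1.add h2).congr fun s => by ring
    · have h1 : Summable (fun s : ℕ => 1 / (s : ℝ) ^ 2) :=
        Real.summable_one_div_nat_pow.2 (by norm_num)
      have h2 := ((summable_nat_add_iff 1).2 h1).mul_left 120
      refine h2.congr fun s => by push_cast; ring
  have hmain : Tendsto (fun n => ∑' s, if s ≤ k n ∧ s + 3 ≤ n then c n s 1 else 0) atTop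
      (nhds (∑' s : ℕ, ((s : ℝ) + 1) * (1 / 2 : ℝ) ^ s)) := by
    refine tendsto_tsum_of_dominated_convergence hsumm ?_ ?_
    · intro s
      refine (c_tendsto s).congr' ?_
      filter_upwards [hk.eventually_ge_atTop s, eventually_ge_atTop (s + 3)] with n h1 h2
      rw [if_pos ⟨h1, h2⟩]
    · refine Eventually.of_forall fun n s => ?_
      split_ifs with h
      · rw [Real.norm_eq_abs, abs_of_nonneg (c_nonneg n s)]
        exact c_bound n s h.2
      · rw [norm_zero]; positivity
  rw [hgeo.tsum_eq] at hmain
  have := hmain.add hsmall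
  rw [add_zero] at this
  exact this.congr fun n => (hdec n).symm
end

section
/- Let w_n denote the number of direct paths from ∅ to [n] in the n-dimensional hypercube that are edge-disjoint from the canonical path π_n. Then there exists a constant C > 0 such that for every n ≥ 1, (1 − C/n) · n! ≤ w_n ≤ n!; in particular w_n / n! → 1 as n → ∞. -/
open MeasureTheory Filter

namespace RandomHypercube

lemma aux_fact (a b : ℕ) (ha : 1 ≤ a) : a.factorial * (b+1).factorial ≤ (a+b).factorial := by
  induction b with
  | zero => simp
  | succ b ih =>
    rw [Nat.factorial_succ (b+1), ← add_assoc, Nat.factorial_succ (a+b)]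
    calc a.factorial * ((b+1+1) * (b+1).factorial)
        = (b+1+1) * (a.factorial * (b+1).factorial) := by ring
      _ ≤ (a+b+1) * (a+b).factorial := Nat.mul_le_mul (by omega) ih

lemma aux_term (N j : ℕ) (hj : j < N+1) : j.factorial * (N-j).factorial ≤
    (if j = 0 then N.factorial else 0) + (if j = N then N.factorial else 0)
      + (N-1).factorial := by
  rcases Nat.eq_zero_or_pos j with h | h
  · subst h; simp; omega
  · by_cases h2 : j = N
    · subst h2; simp; omega
    · have := aux_fact j (N-j-1) h
      rw [show N-j-1+1 = N-j by omega, show j+(N-j-1) = N-1 by omega] at this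
      omega

lemma aux_sum (N : ℕ) : ∑ j ∈ Finset.range (N+1), j.factorial * (N-j).factorial
    ≤ 4 * N.factorial := by
  refine (Finset.sum_le_sum fun j hj => aux_term N j (Finset.mem_range.1 hj)).trans ?_
  rw [Finset.sum_add_distrib, Finset.sum_add_distrib, Finset.sum_ite_eq', Finset.sum_ite_eq']
  rcases N with _ | N
  · simp
  · simp [Nat.factorial_succ]
    nlinarith [Nat.factorial_pos N, Nat.zero_le (N * N.factorial)]

def cls (n : ℕ) (j : Fin n) (a : Fin n) : Fin 3 :=
  if a < j then 0 else if a = j then 1 else 2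

lemma cls_of_shared (n : ℕ) (j : Fin n) (σ : Equiv.Perm (Fin n)) (h : j ∈ sharedSteps n σ 1) :
    cls n j ∘ σ = cls n j := by
  simp only [sharedSteps, Finset.mem_filter, Finset.mem_univ, true_and, pathEdge, initSeg,
    Prod.mk.injEq, Equiv.Perm.coe_one, id] at h
  obtain ⟨h1, h2⟩ := h
  funext a
  have hlt : σ a < j ↔ a < j := by
    have : σ a ∈ (Finset.univ.filter fun i => i < j).image σ ↔
      σ a ∈ (Finset.univ.filter fun i => i < j) := by
      rw [h1]; simp
    simpa using this.symm
  have heq : σ a = j ↔ a = j := by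
    constructor
    · intro h; exact σ.injective (h.trans h2.symm)
    · rintro rfl; exact h2
  simp only [cls, Function.comp, hlt, heq]

lemma card_shared (n : ℕ) (j : Fin n) :
    (Finset.univ.filter fun σ : Equiv.Perm (Fin n) => j ∈ sharedSteps n σ 1).card
      ≤ (j : ℕ).factorial * (n - 1 - j).factorial := by
  have h := DomMulAct.stabilizer_card (cls n j)
  rw [Fintype.card_subtype, Fin.prod_univ_three] at h
  have e0 : Fintype.card {a // cls n j a = 0} = j := by
    rw [Fintype.card_subtype, ← Fin.card_Iio j]
    congr 1; ext a; simp [cls]; split_ifs <;> simp_all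
  have e1 : Fintype.card {a // cls n j a = 1} = 1 := by
    rw [Fintype.card_subtype, ← Finset.card_singleton j]
    congr 1; ext a; rw [Finset.mem_filter]; unfold cls; split_ifs <;> simp_all <;> omega
  have e2 : Fintype.card {a // cls n j a = 2} = n - 1 - j := by
    rw [Fintype.card_subtype, ← Fin.card_Ioi j]
    congr 1; ext a; rw [Finset.mem_filter]; unfold cls; split_ifs <;> simp_all <;> omega
  rw [e0, e1, e2] at h
  simp only [Nat.factorial_one, mul_one] at h
  rw [← h]
  apply Finset.card_le_card
  intro σ hσ
  simp only [Finset.mem_filter, Finset.mem_univ, true_and] at hσ ⊢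
  exact cls_of_shared n j σ hσ

lemma w_eq (n : ℕ) : w n = (Finset.univ.filter fun σ : Equiv.Perm (Fin n) =>
    sharedSteps n σ 1 = ∅).card := by
  rw [w, Nat.card_eq_fintype_card, Fintype.card_subtype]

lemma w_le (n : ℕ) : w n ≤ n.factorial := by
  rw [w_eq]
  refine (Finset.card_le_univ _).trans ?_
  simp [Fintype.card_perm]

lemma le_w (N : ℕ) : (N+1).factorial ≤ w (N+1) + 4 * N.factorial := by
  have h1 := Finset.card_filter_add_card_filter_not (s := Finset.univ)
    (fun σ : Equiv.Perm (Fin (N+1)) => sharedSteps (N+1) σ 1 = ∅)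
  rw [← w_eq, Finset.card_univ, Fintype.card_perm, Fintype.card_fin] at h1
  have h2 : (Finset.univ.filter fun σ : Equiv.Perm (Fin (N+1)) =>
      ¬ sharedSteps (N+1) σ 1 = ∅).card ≤ 4 * N.factorial := by
    calc _ ≤ (Finset.univ.biUnion fun j : Fin (N+1) =>
          Finset.univ.filter fun σ : Equiv.Perm (Fin (N+1)) => j ∈ sharedSteps (N+1) σ 1).card := by
          apply Finset.card_le_card
          intro σ hσ
          simp only [Finset.mem_filter, Finset.mem_univ, true_and, Finset.mem_biUnion] at hσ ⊢
          exact Finset.nonempty_iff_ne_empty.2 hσ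
      _ ≤ ∑ j : Fin (N+1), (j : ℕ).factorial * (N - j).factorial :=
          Finset.card_biUnion_le.trans (Finset.sum_le_sum fun j _ => card_shared (N+1) j)
      _ = ∑ j ∈ Finset.range (N+1), j.factorial * (N-j).factorial :=
          Fin.sum_univ_eq_sum_range (fun j => j.factorial * (N-j).factorial) (N+1)
      _ ≤ _ := aux_sum N
  omega

lemma main_bound (n : ℕ) (hn : 1 ≤ n) :
    (1 - 4 / (n : ℝ)) * (n.factorial : ℝ) ≤ (w n : ℝ) := by
  obtain ⟨N, rfl⟩ : ∃ N, n = N + 1 := ⟨n - 1, by omega⟩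
  have h : ((N+1).factorial : ℝ) ≤ w (N+1) + 4 * N.factorial := by exact_mod_cast le_w N
  have e : (4 / ((N+1 : ℕ) : ℝ)) * ((N+1).factorial : ℝ) = 4 * N.factorial := by
    have : ((N+1 : ℕ) : ℝ) ≠ 0 := by positivity
    rw [Nat.factorial_succ, Nat.cast_mul]
    field_simp
  rw [sub_mul, e]
  linarith

end RandomHypercube

open RandomHypercube in
/-- The number `w n` of direct paths edge-disjoint from the canonical path satisfies
`(1 - C/n) n! ≤ w n ≤ n!` for some constant `C > 0`; in particular `w n / n! → 1`. -/
theorem w_asymptotics :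
    (∃ C : ℝ, 0 < C ∧ ∀ n : ℕ, 1 ≤ n →
      (1 - C / (n : ℝ)) * (n.factorial : ℝ) ≤ (w n : ℝ) ∧ (w n : ℝ) ≤ (n.factorial : ℝ)) ∧
    Tendsto (fun n : ℕ => (w n : ℝ) / (n.factorial : ℝ)) atTop (nhds 1) := by
  have hle : ∀ n : ℕ, (w n : ℝ) ≤ (n.factorial : ℝ) := fun n => by exact_mod_cast w_le n
  refine ⟨⟨4, by norm_num, fun n hn => ⟨main_bound n hn, hle n⟩⟩, ?_⟩
  have hlim : Tendsto (fun n : ℕ => 1 - 4 / (n : ℝ)) atTop (nhds 1) := by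
    simpa using tendsto_const_nhds.sub (tendsto_const_div_atTop_nhds_zero_nat (4 : ℝ))
  refine tendsto_of_tendsto_of_tendsto_of_le_of_le' hlim tendsto_const_nhds ?_ ?_
  · filter_upwards [eventually_ge_atTop 1] with n hn
    rw [le_div_iff₀ (by positivity)]
    exact main_bound n hn
  · filter_upwards with n
    rw [div_le_one (by positivity)]
    exact hle n
end

section
/- For all integers k ≥ 1 and r ≥ 1, E[Z_{k,r}] = (1 − 2^{−r})^k, where Z_{k,r} = Σ_{i ∈ {1,…,r}^k} exp(−Σ_{j ∈ P(i)} Δ(j)). -/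
open MeasureTheory Filter

/-- The rate-1 exponential distribution: density `e^{-z}` on `(0, ∞)`. -/
noncomputable def expMeasure : Measure ℝ :=
  ((volume : Measure ℝ).restrict (Set.Ioi 0)).withDensity fun z =>
    ENNReal.ofReal (Real.exp (-z))

/-- A finite nonempty sequence of positive integers, encoded as (initial segment, last
entry). -/
abbrev SeqIdx := List ℕ+ × ℕ+

/-- `treeSum Δ k r = Z_{k,r} = Σ_{i ∈ {1,…,r}^k} exp(-Σ_{j ∈ P(i)} Δ(j))
= Σ_{i ∈ {1,…,r}^k} ∏_{ℓ=1}^{k} ∏_{j=1}^{i_ℓ} exp(-Δ(i_1,…,i_{ℓ-1},j))`,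
where `i ∈ {1,…,r}^k` is encoded as `i : Fin k → Fin r` via `i_ℓ = (i ℓ) + 1`. -/
noncomputable def treeSum {Ω : Type*} (Δ : SeqIdx → Ω → ℝ) (k r : ℕ) (ω : Ω) : ℝ :=
  ∑ i : Fin k → Fin r, ∏ ℓ : Fin k, ∏ j ∈ Finset.range ((i ℓ : ℕ) + 1),
    Real.exp (-(Δ ((List.ofFn fun m : Fin k => Nat.succPNat (i m)).take ℓ.val,
      Nat.succPNat j) ω))

theorem integral_exp_neg_expMeasure : ∫ z, Real.exp (-z) ∂expMeasure = 2⁻¹ := by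
  unfold expMeasure
  rw [integral_withDensity_eq_integral_toReal_smul (by fun_prop) (by simp)]
  have h : ∀ z : ℝ, (ENNReal.ofReal (Real.exp (-z))).toReal • Real.exp (-z)
      = Real.exp ((-2) * z) := by
    intro z
    rw [ENNReal.toReal_ofReal (Real.exp_pos _).le, smul_eq_mul, ← Real.exp_add]
    ring_nf
  simp_rw [h]
  rw [integral_exp_mul_Ioi (by norm_num)]
  norm_num

theorem integral_term {Ω : Type*} [MeasurableSpace Ω] (μ : Measure Ω)
    [IsProbabilityMeasure μ] (Δ : SeqIdx → Ω → ℝ)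
    (hmeas : ∀ idx, Measurable (Δ idx))
    (hindep : ProbabilityTheory.iIndepFun Δ μ)
    (hdist : ∀ idx, Measure.map (Δ idx) μ = expMeasure)
    (k r : ℕ) (i : Fin k → Fin r) :
    ∫ ω, ∏ ℓ : Fin k, ∏ j ∈ Finset.range ((i ℓ : ℕ) + 1),
      Real.exp (-(Δ ((List.ofFn fun m : Fin k => Nat.succPNat (i m)).take ℓ.val,
      Nat.succPNat j) ω)) ∂μ = ∏ ℓ : Fin k, (2⁻¹ : ℝ) ^ ((i ℓ : ℕ) + 1) := by
  let g : (Σ ℓ : Fin k, Fin ((i ℓ : ℕ) + 1)) → SeqIdx := fun p =>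
    ((List.ofFn fun m : Fin k => Nat.succPNat (i m)).take p.1.val, Nat.succPNat p.2)
  have hg : Function.Injective g := by
    rintro ⟨a, b⟩ ⟨c, d⟩ h
    simp only [g, Prod.mk.injEq] at h
    have h1 := congrArg List.length h.1
    simp only [List.length_take, List.length_ofFn] at h1
    have h2 : a = c := by
      apply Fin.ext
      have := a.2
      have := c.2
      omega
    subst h2
    have h3 := Nat.succPNat_injective h.2
    rw [Fin.ext h3]
  have hE : ∀ idx, ∫ ω, Real.exp (-(Δ idx ω)) ∂μ = 2⁻¹ := by
    intro idx
    rw [← integral_exp_neg_expMeasure, ← hdist idx,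
      integral_map (hmeas idx).aemeasurable (by fun_prop)]
  have key := (hindep.precomp hg).integral_fun_prod_comp (f := fun _ x => Real.exp (-x))
    (fun p => (hmeas (g p)).aemeasurable) (fun p => by fun_prop)
  simp only [hE, Fintype.prod_sigma] at key
  simp only [Finset.prod_range]
  simpa [g] using key

/-- For i.i.d. rate-1 exponentials `Δ` indexed by finite nonempty sequences of positive
integers, `E[Z_{k,r}] = (1 - 2^{-r})^k`. -/
theorem expectation_treeSum {Ω : Type*} [MeasurableSpace Ω] (μ : Measure Ω)
    [IsProbabilityMeasure μ] (Δ : SeqIdx → Ω → ℝ)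
    (hmeas : ∀ idx, Measurable (Δ idx))
    (hindep : ProbabilityTheory.iIndepFun Δ μ)
    (hdist : ∀ idx, Measure.map (Δ idx) μ = expMeasure)
    (k r : ℕ) (hk : 1 ≤ k) (hr : 1 ≤ r) :
    ∫ ω, treeSum Δ k r ω ∂μ = (1 - ((2 : ℝ)⁻¹) ^ r) ^ k := by
  unfold treeSum
  rw [integral_finset_sum]
  · simp_rw [integral_term μ Δ hmeas hindep hdist k r]
    have := Finset.prod_univ_sum (fun _ : Fin k => (Finset.univ : Finset (Fin r)))
      (fun _ j => (2⁻¹ : ℝ) ^ ((j : ℕ) + 1))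
    rw [Fintype.piFinset_univ] at this
    rw [← this, Finset.prod_const, Finset.card_univ, Fintype.card_fin]
    congr 1
    rw [Fin.sum_univ_eq_sum_range (fun j => (2⁻¹ : ℝ) ^ (j + 1))]
    clear this hr
    induction r with
    | zero => simp
    | succ n ih => rw [Finset.sum_range_succ, ih]; ring
  · intro i _
    by_contra h
    have h1 := integral_term μ Δ hmeas hindep hdist k r i
    rw [integral_undef h] at h1
    have : (0 : ℝ) < ∏ ℓ : Fin k, (2⁻¹ : ℝ) ^ ((i ℓ : ℕ) + 1) :=
      Finset.prod_pos fun _ _ => by positivity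
    exact this.ne h1
end
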